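/- Fix integers j and k with k ≥ 1, and an integer l with |l| ≤ k−1 and l ≡ k−1 (mod 2). Let S = [j+l−2(k−1), j+l+2(k−1)]_4. Then F_{j,k}|_S = 0. -/

import Mathlib

/-!
Only the columns over the line `s - r = -l` matter. For `(r,s)` on that line inside the diamond,
`3r+s+j` lies in `S`, so every element of `P_k` above the line has weight `-1` after substitution.
Elements of `Q_{k+1}` have all their neighbours in the cover relation in `Q_k`. Call an element `x`
of `Q_{k+1}` above the line *free* for an ideal `I` if everything it covers is in `I` and nothing
covering it is in `I`. Adding or removing a free element keeps `I` an ideal, negates its weight and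
does not alter the set of free elements. Hence, once every ideal is known to have a free element,
toggling a free element (selected as a function of the set of free elements alone) is a
sign-reversing involution on ideals, and the sum vanishes.

The existence of a free element (`exists_free`) amounts to the fact that each row of an
alternating sign matrix contains a `1`. An ideal has a height `h(r,s)` above each point of the
`Q_k` lattice, heights at diagonally adjacent points differ by exactly `2`, and on the boundary
`|r|+|s| = k` one has `h = k - 2|r|`. Along the two diagonals next to the line, the difference of
heights therefore goes from `-2` to `2`; where the sign changes, the four heights around a point of
the line are forced to leave exactly one element free.
-/

open MvPolynomial
open scoped Classical

noncomputable section

/-- The set `Q_k`: triples `(r,s,t)` with `|r|+|s| ≤ k-2`, `r+s ≡ k (mod 2)`,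
`t ≡ 2|s|-k+2 (mod 4)` and `2|s|-k+2 ≤ t ≤ k-2-2|r|`. -/
def pentagramQ (k : ℤ) : Set (ℤ × ℤ × ℤ) :=
  {p | |p.1| + |p.2.1| ≤ k - 2 ∧ (2 : ℤ) ∣ (p.1 + p.2.1 - k) ∧
    (4 : ℤ) ∣ (p.2.2 - (2 * |p.2.1| - k + 2)) ∧
    2 * |p.2.1| - k + 2 ≤ p.2.2 ∧ p.2.2 ≤ k - 2 - 2 * |p.1|}

/-- The set `P_k = Q_k ∪ Q_{k+1}`. -/
def pentagramP (k : ℤ) : Set (ℤ × ℤ × ℤ) := pentagramQ k ∪ pentagramQ (k + 1)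

/-- The covering relation: `(r',s',t')` covers `(r,s,t)` iff `t' = t + 1` and
`|r'-r| + |s'-s| = 1`. -/
def pentagramCovers (x y : ℤ × ℤ × ℤ) : Prop :=
  y.2.2 = x.2.2 + 1 ∧ |y.1 - x.1| + |y.2.1 - x.2.1| = 1

/-- The partial order on `P_k`: the reflexive-transitive closure of the covering
relation within `P_k`. -/
def pentagramLe (k : ℤ) : (ℤ × ℤ × ℤ) → (ℤ × ℤ × ℤ) → Prop :=
  Relation.ReflTransGen
    (fun x y => x ∈ pentagramP k ∧ y ∈ pentagramP k ∧ pentagramCovers x y)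

/-- An order ideal of `P_k`: a downward-closed subset of `P_k`. -/
def IsPentagramOrderIdeal (k : ℤ) (I : Set (ℤ × ℤ × ℤ)) : Prop :=
  I ⊆ pentagramP k ∧ ∀ x y, y ∈ I → pentagramLe k x y → x ∈ I

/-- `P_k` realized as a `Finset` (it is contained in the displayed finite box). -/
def pentagramPFinset (k : ℤ) : Finset (ℤ × ℤ × ℤ) :=
  ((Finset.Icc (-(k-1)) (k-1)) ×ˢ (Finset.Icc (-(k-1)) (k-1)) ×ˢ
    (Finset.Icc (-(k-1)) (k-1))).filter (fun p => p ∈ pentagramP k)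

/-- The F-polynomial `F_{j,k} = Σ_{order ideals I of P_k} Π_{(r,s,t) ∈ I} y_{3r+s+j}`,
as an element of `ℤ[y_i : i ∈ ℤ] = MvPolynomial ℤ ℤ`. -/
def pentagramF (j k : ℤ) : MvPolynomial ℤ ℤ :=
  ∑ I ∈ (pentagramPFinset k).powerset.filter
      (fun I : Finset (ℤ × ℤ × ℤ) => IsPentagramOrderIdeal k (↑I : Set (ℤ × ℤ × ℤ))),
    ∏ p ∈ I, X (3 * p.1 + p.2.1 + j)

/-- The ring endomorphism of `ℤ[y_i : i ∈ ℤ]` sending `y_i ↦ -1` for `i ∈ S`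
and fixing the other variables; `substNeg S F` is `F|_S`. -/
def substNeg (S : Set ℤ) : MvPolynomial ℤ ℤ →+* MvPolynomial ℤ ℤ :=
  (MvPolynomial.aeval
    (fun i : ℤ => if i ∈ S then (-1 : MvPolynomial ℤ ℤ) else X i)).toRingHom

/-- The arithmetic progression `[a,b]_d = {a, a+d, a+2d, …, b}` (as a subset of `ℤ`). -/
def AP (a b d : ℤ) : Set ℤ := {x | a ≤ x ∧ x ≤ b ∧ d ∣ (x - a)}

/-- `I` is closed under passing to covered elements of `P_k`. -/
def CoverClosed (k : ℤ) (I : Set (ℤ × ℤ × ℤ)) : Prop :=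
  I ⊆ pentagramP k ∧ ∀ x y, x ∈ pentagramP k → y ∈ I → pentagramCovers x y → x ∈ I

lemma isIdeal_iff (k : ℤ) (I : Set (ℤ × ℤ × ℤ)) :
    IsPentagramOrderIdeal k I ↔ CoverClosed k I := by
  constructor
  · rintro ⟨h1, h2⟩
    exact ⟨h1, fun x y hx hy hc => h2 x y hy (Relation.ReflTransGen.single ⟨hx, h1 hy, hc⟩)⟩
  · rintro ⟨h1, h2⟩
    refine ⟨h1, fun x y hy hle => ?_⟩
    unfold pentagramLe at hle
    induction hle using Relation.ReflTransGen.head_induction_on with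
    | refl => exact hy
    | head hab _ ih => exact h2 _ _ hab.1 ih hab.2.2

/-- The free elements for `I` above the line `s - r = -l`: elements of `Q_{k+1}` all of whose lower
covers are in `I` and none of whose upper covers are in `I`. -/
def freeSet (k l : ℤ) (I : Set (ℤ × ℤ × ℤ)) : Set (ℤ × ℤ × ℤ) :=
  {x | x ∈ pentagramQ (k + 1) ∧ x.2.1 - x.1 = -l ∧
    (∀ y ∈ pentagramP k, pentagramCovers y x → y ∈ I) ∧
    (∀ z ∈ pentagramP k, pentagramCovers x z → z ∉ I)}

/-- Membership in `I` extended downwards: everything below the floor of a column counts as in. -/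
def ExtMem (k : ℤ) (I : Set (ℤ × ℤ × ℤ)) (r s t : ℤ) : Prop :=
  t < 2 * |s| - k ∨ (r, s, t) ∈ I

/-- An element of `Q_k` covers the points displaced in the direction of `r`. -/
lemma ExtMem.stepR {k : ℤ} {I : Set (ℤ × ℤ × ℤ)} (hI : CoverClosed k I) {r s t r' : ℤ}
    (hp : (2 : ℤ) ∣ r + s - k) (ht : (4 : ℤ) ∣ t - (2 * |s| - k + 2))
    (hr : r' = r + 1 ∨ r' = r - 1) (h : ExtMem k I r s t) : ExtMem k I r' s (t - 1) := by
  rcases h with h | h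
  · left; omega
  · by_cases hlt : t - 1 < 2 * |s| - k
    · exact Or.inl hlt
    · right
      refine hI.2 _ _ ?_ h ?_
      · have hP := hI.1 h
        simp only [pentagramP, pentagramQ, Set.mem_union, Set.mem_ofPred_eq,
          abs_eq_max_neg] at hP ht hlt ⊢
        omega
      · simp only [pentagramCovers, abs_eq_max_neg]
        omega

/-- An element of `Q_{k+1}` covers the points displaced in the direction of `s`. -/
lemma ExtMem.stepS {k : ℤ} {I : Set (ℤ × ℤ × ℤ)} (hI : CoverClosed k I) {r s t s' : ℤ}
    (hp : (2 : ℤ) ∣ r + s - k - 1) (ht : (4 : ℤ) ∣ t - (2 * |s| - k + 1))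
    (hs : s' = s + 1 ∨ s' = s - 1) (h : ExtMem k I r s t) : ExtMem k I r s' (t - 1) := by
  rcases h with h | h
  · left
    simp only [abs_eq_max_neg] at h ht ⊢
    omega
  · by_cases hlt : t - 1 < 2 * |s'| - k
    · exact Or.inl hlt
    · right
      refine hI.2 _ _ ?_ h ?_
      · have hP := hI.1 h
        simp only [pentagramP, pentagramQ, Set.mem_union, Set.mem_ofPred_eq,
          abs_eq_max_neg] at hP ht hlt ⊢
        omega
      · simp only [pentagramCovers, abs_eq_max_neg]
        omega

/-- Two cover steps: from a point of the `Q_k` lattice down to a diagonally adjacent one. -/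
lemma ExtMem.diag {k : ℤ} {I : Set (ℤ × ℤ × ℤ)} (hI : CoverClosed k I) {r s t r' s' : ℤ}
    (hp : (2 : ℤ) ∣ r + s - k) (ht : (4 : ℤ) ∣ t - (2 * |s| - k + 2))
    (hr : r' = r + 1 ∨ r' = r - 1) (hs : s' = s + 1 ∨ s' = s - 1)
    (h : ExtMem k I r s t) : ExtMem k I r' s' (t - 2) := by
  have h1 := h.stepR hI hp ht hr
  have h2 := h1.stepS hI (s' := s') (by omega) (by omega) hs
  rwa [show t - 1 - 1 = t - 2 by ring] at h2

lemma ExtMem.down {k : ℤ} {I : Set (ℤ × ℤ × ℤ)} (hI : CoverClosed k I) {r s t : ℤ}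
    (hp : (2 : ℤ) ∣ r + s - k) (ht : (4 : ℤ) ∣ t - (2 * |s| - k + 2))
    (h : ExtMem k I r s t) : ExtMem k I r s (t - 4) := by
  have h1 := h.diag hI (r' := r + 1) (s' := s + 1) hp ht (Or.inl rfl) (Or.inl rfl)
  have h2 := h1.diag hI (r' := r) (s' := s) (by omega)
    (by simp only [abs_eq_max_neg] at ht ⊢; omega) (by omega) (by omega)
  rwa [show t - 2 - 2 = t - 4 by ring] at h2

/-- The properties of the height `h` of the column of `I` above a point `(r,s)` of the `Q_k`
lattice: the heights run through `2|s|-k, 2|s|-k+4, …, k-2|r|`. -/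
def IsHeight (k : ℤ) (I : Set (ℤ × ℤ × ℤ)) (r s h : ℤ) : Prop :=
  (4 : ℤ) ∣ h - (2 * |s| - k) ∧ 2 * |s| - k ≤ h ∧ h ≤ k - 2 * |r| ∧
    ∀ t, (4 : ℤ) ∣ t - (2 * |s| - k + 2) → (ExtMem k I r s t ↔ t < h)

lemma exists_height {k : ℤ} {I : Set (ℤ × ℤ × ℤ)} (hI : CoverClosed k I) {r s : ℤ}
    (hp : (2 : ℤ) ∣ r + s - k) (hb : |r| + |s| ≤ k) : ∃ h, IsHeight k I r s h := by
  have hub : ∀ t, ((4 : ℤ) ∣ t - (2 * |s| - k + 2) ∧ ExtMem k I r s t) → t ≤ k - 2 * |r| - 2 := by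
    rintro t ⟨ht, h | h⟩
    · omega
    · have hP := hI.1 h
      simp only [pentagramP, pentagramQ, Set.mem_union, Set.mem_ofPred_eq,
          abs_eq_max_neg] at hP ht hb ⊢
      omega
  have hne : (4 : ℤ) ∣ (2 * |s| - k - 2) - (2 * |s| - k + 2) ∧ ExtMem k I r s (2 * |s| - k - 2) :=
    ⟨by omega, Or.inl (by omega)⟩
  obtain ⟨m, ⟨hm1, hm2⟩, hm3⟩ := Int.exists_greatest_of_bdd
    (P := fun t => (4 : ℤ) ∣ t - (2 * |s| - k + 2) ∧ ExtMem k I r s t)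
    ⟨k - 2 * |r| - 2, hub⟩ ⟨_, hne⟩
  have hmu := hub m ⟨hm1, hm2⟩
  have hml := hm3 _ hne
  refine ⟨m + 2, by omega, by omega, by omega, fun t ht => ⟨fun h => ?_, fun h => ?_⟩⟩
  · have := hm3 t ⟨ht, h⟩
    omega
  · have key : ∀ n : ℕ, ExtMem k I r s (m - 4 * n) := by
      intro n
      induction n with
      | zero => simpa using hm2
      | succ n ih =>
        have := ih.down hI hp (by omega)
        rwa [show m - 4 * (n : ℤ) - 4 = m - 4 * ((n + 1 : ℕ) : ℤ) by push_cast; ring] at this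
    obtain ⟨n, hn⟩ : ∃ n : ℕ, t = m - 4 * n := ⟨((m - t) / 4).toNat, by omega⟩
    rw [hn]
    exact key n

lemma height_le {k : ℤ} {I : Set (ℤ × ℤ × ℤ)} (hI : CoverClosed k I) {r s r' s' h h' : ℤ}
    (hp : (2 : ℤ) ∣ r + s - k) (hr : r' = r + 1 ∨ r' = r - 1) (hs : s' = s + 1 ∨ s' = s - 1)
    (H : IsHeight k I r s h) (H' : IsHeight k I r' s' h') : h ≤ h' + 2 := by
  have h1 : ExtMem k I r s (h - 2) := (H.2.2.2 (h - 2) (by have := H.1; omega)).2 (by omega)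
  have h2 := h1.diag hI hp (by have := H.1; omega) hr hs
  have h3 := (H'.2.2.2 _ (by
    have := H.1
    simp only [abs_eq_max_neg] at this ⊢
    omega)).1 h2
  have h4 := H.1
  have h5 := H'.1
  simp only [abs_eq_max_neg] at h4 h5
  omega

/-- Diagonally adjacent heights differ by exactly `2`: they are within `2` of each other and
incongruent modulo `4`. -/
lemma height_diff {k : ℤ} {I : Set (ℤ × ℤ × ℤ)} (hI : CoverClosed k I) {r s r' s' h h' : ℤ}
    (hp : (2 : ℤ) ∣ r + s - k) (hr : r' = r + 1 ∨ r' = r - 1) (hs : s' = s + 1 ∨ s' = s - 1)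
    (H : IsHeight k I r s h) (H' : IsHeight k I r' s' h') : h = h' + 2 ∨ h' = h + 2 := by
  have h1 := height_le hI hp hr hs H H'
  have h2 := height_le hI (by omega) (by omega) (by omega) H' H
  have h3 := H.1
  have h4 := H'.1
  simp only [abs_eq_max_neg] at h3 h4
  omega

/-- An element of `Q_{k+1}` covers elements of `Q_k` only, displaced in the direction of `s`. -/
lemma lower_cases {k r s t r' s' t' : ℤ} (hx : (r, s, t) ∈ pentagramQ (k + 1))
    (hy : (r', s', t') ∈ pentagramP k) (hc : pentagramCovers (r', s', t') (r, s, t)) :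
    r' = r ∧ (s' = s + 1 ∨ s' = s - 1) ∧ t' = t - 1 ∧ ¬ t' < 2 * |s'| - k := by
  simp only [pentagramP, pentagramQ, pentagramCovers, Set.mem_union, Set.mem_ofPred_eq,
    abs_eq_max_neg] at *
  omega

/-- An element of `Q_{k+1}` is covered by elements of `Q_k` only, displaced in the direction
of `r`. -/
lemma upper_cases {k r s t r' s' t' : ℤ} (hx : (r, s, t) ∈ pentagramQ (k + 1))
    (hy : (r', s', t') ∈ pentagramP k) (hc : pentagramCovers (r, s, t) (r', s', t')) :
    s' = s ∧ (r' = r + 1 ∨ r' = r - 1) ∧ t' = t + 1 := by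
  simp only [pentagramP, pentagramQ, pentagramCovers, Set.mem_union, Set.mem_ofPred_eq,
    abs_eq_max_neg] at *
  omega

lemma exists_free {k l : ℤ} (hl : |l| ≤ k - 1) (hpar : (2 : ℤ) ∣ (l - (k - 1)))
    {I : Set (ℤ × ℤ × ℤ)} (hI : CoverClosed k I) : (freeSet k l I).Nonempty := by
  obtain ⟨m, hm⟩ : ∃ m, l = k - 1 - 2 * m := ⟨(k - 1 - l) / 2, by omega⟩
  have hm0 : 0 ≤ m ∧ m ≤ k - 1 := by
    rw [abs_le] at hl
    omega
  have hex : ∀ r s, ∃ h, (2 : ℤ) ∣ r + s - k → |r| + |s| ≤ k → IsHeight k I r s h := by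
    intro r s
    by_cases hc : (2 : ℤ) ∣ r + s - k ∧ |r| + |s| ≤ k
    · obtain ⟨h, hh⟩ := exists_height hI hc.1 hc.2
      exact ⟨h, fun _ _ => hh⟩
    · exact ⟨0, fun h1 h2 => absurd ⟨h1, h2⟩ hc⟩
  choose h hh using hex
  -- The line is `(n - m, n - (k-1) + m)` for `0 ≤ n < k`; `a` and `b` are the heights along the
  -- two neighbouring diagonals, for `0 ≤ n ≤ k`.
  let a : ℤ → ℤ := fun n => h (n - m - 1) (n - (k - 1) + m)
  let b : ℤ → ℤ := fun n => h (n - m) (n - (k - 1) + m - 1)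
  have ha : ∀ n, 0 ≤ n → n ≤ k → IsHeight k I (n - m - 1) (n - (k - 1) + m) (a n) :=
    fun n h1 h2 => hh _ _ (by omega) (by simp only [abs_eq_max_neg]; omega)
  have hb : ∀ n, 0 ≤ n → n ≤ k → IsHeight k I (n - m) (n - (k - 1) + m - 1) (b n) :=
    fun n h1 h2 => hh _ _ (by omega) (by simp only [abs_eq_max_neg]; omega)
  obtain ⟨n, hn0, hnk, hn1, hn2⟩ : ∃ n, 0 ≤ n ∧ n < k ∧ a n < b n ∧ b (n + 1) ≤ a (n + 1) := by
    by_contra hcon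
    push Not at hcon
    have hall : ∀ i : ℕ, (i : ℤ) ≤ k → a i < b i := by
      intro i
      induction i with
      | zero =>
        intro hi
        have h1 := ha 0 le_rfl (by omega)
        have h2 := hb 0 le_rfl (by omega)
        simp only [IsHeight, abs_eq_max_neg] at h1 h2
        push_cast
        omega
      | succ i ih =>
        intro hi
        push_cast at hi ⊢
        exact hcon i (by omega) (by omega) (ih (by omega))
    have hk := hall k.toNat (by omega)
    rw [show ((k.toNat : ℕ) : ℤ) = k by omega] at hk
    have h1 := ha k (by omega) le_rfl
    have h2 := hb k (by omega) le_rfl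
    simp only [IsHeight, abs_eq_max_neg] at h1 h2
    omega
  have A0 := ha n hn0 (by omega)
  have B0 := hb n hn0 (by omega)
  have A1 := ha (n + 1) (by omega) (by omega)
  have B1 := hb (n + 1) (by omega) (by omega)
  have d1 := height_diff hI (by omega) (by omega) (by omega) A0 B0
  have d2 := height_diff hI (by omega) (by omega) (by omega) A1 B1
  have d3 := height_diff hI (by omega) (by omega) (by omega) A0 A1
  have d4 := height_diff hI (by omega) (by omega) (by omega) B0 B1
  generalize a n = a0 at *
  generalize b n = b0 at *
  generalize a (n + 1) = a1 at *
  generalize b (n + 1) = b1 at *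
  obtain ⟨r, hr⟩ : ∃ r, r = n - m := ⟨_, rfl⟩
  obtain ⟨s, hs⟩ : ∃ s, s = n - (k - 1) + m := ⟨_, rfl⟩
  rw [show n - m - 1 = r - 1 by omega, show n - (k - 1) + m = s by omega] at A0
  rw [show n - m = r by omega, show n - (k - 1) + m - 1 = s - 1 by omega] at B0
  rw [show n + 1 - m - 1 = r by omega, show n + 1 - (k - 1) + m = s + 1 by omega] at A1
  rw [show n + 1 - m = r + 1 by omega, show n + 1 - (k - 1) + m - 1 = s by omega] at B1
  -- The differences of `2` and the sign change force `b0 = a1` and `a0 = b1 = a1 - 2`.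
  obtain ⟨t, rfl⟩ : ∃ t, a1 = t + 1 := ⟨a1 - 1, by omega⟩
  obtain rfl : b0 = t + 1 := by omega
  obtain rfl : a0 = t - 1 := by omega
  obtain rfl : b1 = t - 1 := by omega
  obtain ⟨A0a, A0b, A0c, A0⟩ := A0
  obtain ⟨B0a, B0b, B0c, B0⟩ := B0
  obtain ⟨A1a, A1b, A1c, A1⟩ := A1
  obtain ⟨B1a, B1b, B1c, B1⟩ := B1
  have hx : (r, s, t) ∈ pentagramQ (k + 1) := by
    clear A0 A1 B0 B1 hn1 hn2 d1 d2 d3 d4 ha hb hh hI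
    simp only [pentagramQ, Set.mem_ofPred_eq, abs_eq_max_neg] at *
    omega
  refine ⟨(r, s, t), hx, by show s - r = -l; omega, ?_, ?_⟩
  · rintro ⟨r', s', t'⟩ hy hc
    obtain ⟨h1, h2 | h2, h3, h4⟩ := lower_cases hx hy hc <;> rw [h3, h2] at h4 <;>
      rw [h1, h2, h3]
    · exact ((A1 _ (by omega)).2 (by omega)).resolve_left h4
    · exact ((B0 _ (by omega)).2 (by omega)).resolve_left h4
  · rintro ⟨r', s', t'⟩ hy hc hmem
    obtain ⟨h1, h2 | h2, h3⟩ := upper_cases hx hy hc <;> rw [h1, h2, h3] at hmem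
    · have := (B1 _ (by omega)).1 (Or.inr hmem)
      omega
    · have := (A0 _ (by omega)).1 (Or.inr hmem)
      omega

/-- Add `x` to `I` if it is absent, remove it if it is present. -/
def toggle (x : ℤ × ℤ × ℤ) (I : Finset (ℤ × ℤ × ℤ)) : Finset (ℤ × ℤ × ℤ) :=
  if x ∈ I then I.erase x else insert x I

lemma mem_toggle_of_ne {x y : ℤ × ℤ × ℤ} {I : Finset (ℤ × ℤ × ℤ)} (h : y ≠ x) :
    y ∈ toggle x I ↔ y ∈ I := by
  unfold toggle
  split_ifs <;> simp [h]

lemma mem_toggle_self {x : ℤ × ℤ × ℤ} {I : Finset (ℤ × ℤ × ℤ)} :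
    x ∈ toggle x I ↔ x ∉ I := by
  unfold toggle
  split_ifs with h <;> simp [h]

lemma toggle_toggle (x : ℤ × ℤ × ℤ) (I : Finset (ℤ × ℤ × ℤ)) : toggle x (toggle x I) = I := by
  ext y
  by_cases h : y = x
  · subst h
    simp [mem_toggle_self]
  · rw [mem_toggle_of_ne h, mem_toggle_of_ne h]

lemma covers_ne {x y : ℤ × ℤ × ℤ} (h : pentagramCovers x y) : x ≠ y := by
  rintro rfl
  have := h.1
  omega

lemma toggle_closed {k l : ℤ} {x : ℤ × ℤ × ℤ} {I : Finset (ℤ × ℤ × ℤ)}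
    (hx : x ∈ freeSet k l I) (hI : CoverClosed k (I : Set (ℤ × ℤ × ℤ))) :
    CoverClosed k (toggle x I : Set (ℤ × ℤ × ℤ)) := by
  obtain ⟨hQ, -, hlow, hup⟩ := hx
  refine ⟨fun y hy => ?_, fun y z hy hz hc => ?_⟩
  · by_cases h : y = x
    · subst h
      exact Or.inr hQ
    · exact hI.1 (by simpa [mem_toggle_of_ne h] using hy)
  · by_cases hzx : z = x
    · subst hzx
      have := hlow y hy hc
      simpa [mem_toggle_of_ne (covers_ne hc)] using this
    · have hzI : z ∈ (I : Set (ℤ × ℤ × ℤ)) := by simpa [mem_toggle_of_ne hzx] using hz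
      by_cases hyx : y = x
      · subst hyx
        exact absurd hzI (hup z (hI.1 hzI) hc)
      · have := hI.2 y z hy hzI hc
        simpa [mem_toggle_of_ne hyx] using this

/-- Freeness only involves elements of `Q_k`, since cover relations change the parity of `r + s`;
toggling an element of `Q_{k+1}` does not affect it. -/
lemma freeSet_toggle {k l : ℤ} {x : ℤ × ℤ × ℤ} {I : Finset (ℤ × ℤ × ℤ)}
    (hx : x ∈ pentagramQ (k + 1)) :
    freeSet k l (toggle x I : Set (ℤ × ℤ × ℤ)) = freeSet k l (I : Set (ℤ × ℤ × ℤ)) := by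
  have hne : ∀ y z, y ∈ pentagramQ (k + 1) → (pentagramCovers z y ∨ pentagramCovers y z) →
      z ≠ x := by
    rintro y z hy hc rfl
    simp only [pentagramQ, pentagramCovers, Set.mem_ofPred_eq, abs_eq_max_neg] at *
    omega
  ext y
  simp only [freeSet, Set.mem_ofPred_eq, Finset.mem_coe]
  refine and_congr_right fun hy => and_congr_right fun _ => and_congr ?_ ?_
  · refine forall_congr' fun z => forall_congr' fun _ => forall_congr' fun hc => ?_
    rw [mem_toggle_of_ne (hne y z hy (Or.inl hc))]
  · refine forall_congr' fun z => forall_congr' fun _ => forall_congr' fun hc => ?_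
    rw [mem_toggle_of_ne (hne y z hy (Or.inr hc))]

/-- A free element, chosen as a function of the set of free elements only
(`0` if that set is empty). -/
def pick (A : Set (ℤ × ℤ × ℤ)) : ℤ × ℤ × ℤ := if h : A.Nonempty then h.some else 0

lemma pick_mem {A : Set (ℤ × ℤ × ℤ)} (h : A.Nonempty) : pick A ∈ A := by
  unfold pick
  rw [dif_pos h]
  exact h.some_mem

lemma coe_subset_box {k : ℤ} {I : Finset (ℤ × ℤ × ℤ)} (h : (I : Set (ℤ × ℤ × ℤ)) ⊆ pentagramP k) :
    I ⊆ pentagramPFinset k := by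
  rintro ⟨r, s, t⟩ hx
  have hP := h hx
  simp only [pentagramPFinset, Finset.mem_filter, Finset.mem_product, Finset.mem_Icc]
  refine ⟨?_, hP⟩
  simp only [pentagramP, pentagramQ, Set.mem_union, Set.mem_ofPred_eq, abs_eq_max_neg] at hP
  omega

lemma substNeg_X_of_mem {S : Set ℤ} {i : ℤ} (h : i ∈ S) : substNeg S (X i) = -1 := by
  simp [substNeg, h]

theorem stmt0 (j k l : ℤ) (hk : 1 ≤ k) (hl : |l| ≤ k - 1) (hpar : (2 : ℤ) ∣ (l - (k - 1))) :
    substNeg (AP (j + l - 2 * (k - 1)) (j + l + 2 * (k - 1)) 4) (pentagramF j k) = 0 := by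
  unfold pentagramF
  rw [map_sum]
  have hfree : ∀ I : Finset (ℤ × ℤ × ℤ), I ∈ (pentagramPFinset k).powerset.filter
      (fun I : Finset (ℤ × ℤ × ℤ) => IsPentagramOrderIdeal k (↑I : Set (ℤ × ℤ × ℤ))) →
      CoverClosed k (I : Set (ℤ × ℤ × ℤ)) ∧
        pick (freeSet k l (I : Set (ℤ × ℤ × ℤ))) ∈ freeSet k l (I : Set (ℤ × ℤ × ℤ)) := by
    intro I hI
    have hc := (isIdeal_iff k _).1 (Finset.mem_filter.1 hI).2
    exact ⟨hc, pick_mem (exists_free hl hpar hc)⟩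
  refine Finset.sum_involution
    (fun I _ => toggle (pick (freeSet k l (I : Set (ℤ × ℤ × ℤ)))) I) ?_ ?_ ?_ ?_
  · intro I hI
    obtain ⟨-, hx⟩ := hfree I hI
    generalize pick (freeSet k l (I : Set (ℤ × ℤ × ℤ))) = x at hx
    have hw : substNeg (AP (j + l - 2 * (k - 1)) (j + l + 2 * (k - 1)) 4)
        (X (3 * x.1 + x.2.1 + j)) = -1 := by
      apply substNeg_X_of_mem
      obtain ⟨hQ, hline, -⟩ := hx
      simp only [AP, pentagramQ, Set.mem_ofPred_eq, abs_eq_max_neg] at hQ ⊢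
      omega
    by_cases hxI : x ∈ I
    · rw [toggle, if_pos hxI, ← Finset.mul_prod_erase I _ hxI, map_mul, hw]
      ring
    · rw [toggle, if_neg hxI, Finset.prod_insert hxI, map_mul, hw]
      ring
  · intro I hI _ heq
    have h := mem_toggle_self (x := pick (freeSet k l (I : Set (ℤ × ℤ × ℤ)))) (I := I)
    rw [heq] at h
    tauto
  · intro I hI
    obtain ⟨hc, hx⟩ := hfree I hI
    have hc' := toggle_closed hx hc
    rw [Finset.mem_filter, Finset.mem_powerset]
    exact ⟨coe_subset_box hc'.1, (isIdeal_iff k _).2 hc'⟩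
  · intro I hI
    obtain ⟨-, hx⟩ := hfree I hI
    rw [freeSet_toggle hx.1, toggle_toggle]

end
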